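/- Let A = (L_1,L_2,L_3,L_4) encode a (4,1) valise adinkra with chirality χ. Then the symmetrized self-gadget satisfies SG(A,A) = −24 − 8·χ; in particular SG(A,A) = −32 if χ = 1 and SG(A,A) = −16 if χ = −1, so the value SG(A,A) determines the chirality of A. -/

import Mathlib

open Matrix

/-- A signed permutation matrix: exactly one nonzero entry in each row and column,
that entry being `1` or `-1`. -/
def IsSignedPerm {n : ℕ} (M : Matrix (Fin n) (Fin n) ℤ) : Prop :=
  (∀ i j, M i j = 0 ∨ M i j = 1 ∨ M i j = -1) ∧
  (∀ i, ∃! j, M i j ≠ 0) ∧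
  (∀ j, ∃! i, M i j ≠ 0)

/-- The garden algebra relations for a family of `d × d` integer matrices. -/
def GardenRel {d N : ℕ} (L : Fin N → Matrix (Fin d) (Fin d) ℤ) : Prop :=
  ∀ I J : Fin N,
    (L I * (L J)ᵀ + L J * (L I)ᵀ =
      if I = J then (2 : ℤ) • (1 : Matrix (Fin d) (Fin d) ℤ) else 0) ∧
    ((L I)ᵀ * L J + (L J)ᵀ * L I =
      if I = J then (2 : ℤ) • (1 : Matrix (Fin d) (Fin d) ℤ) else 0)

/-- The L-matrices of a (4,1) valise adinkra: a quadruple of 4×4 integer signed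
permutation matrices satisfying the garden algebra relations. -/
def IsAdinkra (L : Fin 4 → Matrix (Fin 4) (Fin 4) ℤ) : Prop :=
  (∀ I, IsSignedPerm (L I)) ∧ GardenRel L

/-- The symmetrized gadget `SG(A,A') = Σ trace(L_{I₁}ᵀ·L_{J₁}·L'_{I₂}ᵀ·L'_{J₂})`,
summed over all pairs `I₁ < J₁` and `I₂ < J₂` in `{1,2,3,4}`. -/
def SG (L L' : Fin 4 → Matrix (Fin 4) (Fin 4) ℤ) : ℤ :=
  ∑ I₁ : Fin 4, ∑ J₁ : Fin 4, ∑ I₂ : Fin 4, ∑ J₂ : Fin 4,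
    if I₁ < J₁ ∧ I₂ < J₂ then
      Matrix.trace ((L I₁)ᵀ * L J₁ * (L' I₂)ᵀ * L' J₂)
    else 0

/-- The trace `tr(L_Iᵀ L_J L_Kᵀ L_M)` of which the gadgets are sums. -/
def quadTrace {d N : ℕ} (L : Fin N → Matrix (Fin d) (Fin d) ℤ) (I J K M : Fin N) : ℤ :=
  Matrix.trace ((L I)ᵀ * L J * (L K)ᵀ * L M)

namespace GardenRel

variable {d N : ℕ} {L : Fin N → Matrix (Fin d) (Fin d) ℤ}

lemma transpose_mul_self (h : GardenRel L) (I : Fin N) : (L I)ᵀ * L I = 1 := by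
  have h2 := (h I I).2
  rw [if_pos rfl, ← two_smul ℤ] at h2
  exact smul_right_injective _ two_ne_zero h2

lemma mul_transpose_self (h : GardenRel L) (I : Fin N) : L I * (L I)ᵀ = 1 := by
  have h2 := (h I I).1
  rw [if_pos rfl, ← two_smul ℤ] at h2
  exact smul_right_injective _ two_ne_zero h2

lemma transpose_mul_swap (h : GardenRel L) {I J : Fin N} (hIJ : I ≠ J) :
    (L I)ᵀ * L J = -((L J)ᵀ * L I) := by
  have h2 := (h I J).2
  rw [if_neg hIJ] at h2
  exact eq_neg_of_add_eq_zero_left h2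

lemma mul_transpose_swap (h : GardenRel L) {I J : Fin N} (hIJ : I ≠ J) :
    L I * (L J)ᵀ = -(L J * (L I)ᵀ) := by
  have h2 := (h I J).1
  rw [if_neg hIJ] at h2
  exact eq_neg_of_add_eq_zero_left h2

lemma trace_transpose_mul (h : GardenRel L) (I J : Fin N) :
    Matrix.trace ((L I)ᵀ * L J) = if I = J then (d : ℤ) else 0 := by
  split_ifs with hIJ
  · subst hIJ
    simp [h.transpose_mul_self]
  · have h1 := congrArg Matrix.trace (h.transpose_mul_swap hIJ)
    have h2 := Matrix.trace_transpose ((L I)ᵀ * L J)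
    rw [Matrix.transpose_mul, Matrix.transpose_transpose] at h2
    rw [Matrix.trace_neg] at h1
    omega

lemma quadTrace_swap_middle (h : GardenRel L) {J K : Fin N} (hJK : J ≠ K) (I M : Fin N) :
    quadTrace L I J K M = -quadTrace L I K J M := by
  simp only [quadTrace]
  rw [Matrix.mul_assoc (L I)ᵀ, h.mul_transpose_swap hJK]
  simp [Matrix.mul_assoc]

lemma quadTrace_swap_right (h : GardenRel L) {K M : Fin N} (hKM : K ≠ M) (I J : Fin N) :
    quadTrace L I J K M = -quadTrace L I J M K := by
  simp only [quadTrace]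
  rw [Matrix.mul_assoc ((L I)ᵀ * L J), h.transpose_mul_swap hKM]
  simp [Matrix.mul_assoc]

lemma quadTrace_middle_eq (h : GardenRel L) (I J M : Fin N) :
    quadTrace L I J J M = if I = M then (d : ℤ) else 0 := by
  rw [quadTrace, Matrix.mul_assoc (L I)ᵀ, h.mul_transpose_self, Matrix.mul_one,
    h.trace_transpose_mul]

lemma quadTrace_left_eq (h : GardenRel L) (I K M : Fin N) :
    quadTrace L I I K M = if K = M then (d : ℤ) else 0 := by
  rw [quadTrace, h.transpose_mul_self, Matrix.one_mul, h.trace_transpose_mul]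

end GardenRel

lemma quadTrace_rotate {d N : ℕ} (L : Fin N → Matrix (Fin d) (Fin d) ℤ) (I J K M : Fin N) :
    quadTrace L I J K M = quadTrace L K M I J := by
  simp only [quadTrace]
  rw [Matrix.mul_assoc, Matrix.trace_mul_comm, ← Matrix.mul_assoc]

namespace GardenRel

variable {d N : ℕ} {L : Fin N → Matrix (Fin d) (Fin d) ℤ}

lemma quadTrace_outer_eq (h : GardenRel L) (I J K : Fin N) :
    quadTrace L I J K I = if J = K then (d : ℤ) else 0 := by
  rw [quadTrace_rotate, h.quadTrace_middle_eq]
  simp only [eq_comm]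

lemma quadTrace_odd_eq (h : GardenRel L) {I J : Fin N} (hIJ : I ≠ J) (M : Fin N) :
    quadTrace L I J I M = if J = M then -(d : ℤ) else 0 := by
  rw [h.quadTrace_swap_middle hIJ.symm, h.quadTrace_left_eq]
  split_ifs <;> simp

lemma quadTrace_even_eq (h : GardenRel L) {J K : Fin N} (hJK : J ≠ K) (I : Fin N) :
    quadTrace L I J K J = if I = K then -(d : ℤ) else 0 := by
  rw [h.quadTrace_swap_right hJK.symm, h.quadTrace_middle_eq]
  split_ifs <;> simp

end GardenRel

theorem stmt17 (L : Fin 4 → Matrix (Fin 4) (Fin 4) ℤ) (hL : IsAdinkra L)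
    (χ : ℤ) (hχ : χ = 1 ∨ χ = -1)
    (hchir : (L 0)ᵀ * L 1 * (L 2)ᵀ * L 3 = -(χ • (1 : Matrix (Fin 4) (Fin 4) ℤ))) :
    SG L L = -24 - 8 * χ := by
  have h : GardenRel L := hL.2
  have h0123 : quadTrace L 0 1 2 3 = -4 * χ := by
    rw [quadTrace, hchir, Matrix.trace_neg, Matrix.trace_smul, Matrix.trace_one,
      Fintype.card_fin, smul_eq_mul]
    push_cast
    ring
  have h0213 : quadTrace L 0 2 1 3 = 4 * χ := by
    rw [h.quadTrace_swap_middle (by decide), h0123]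
    ring
  have h0312 : quadTrace L 0 3 1 2 = -4 * χ := by
    rw [h.quadTrace_swap_middle (by decide), h.quadTrace_swap_right (by decide),
      h0123, neg_neg]
  have h2301 : quadTrace L 2 3 0 1 = -4 * χ := by rw [quadTrace_rotate, h0123]
  have h1302 : quadTrace L 1 3 0 2 = 4 * χ := by rw [quadTrace_rotate, h0213]
  have h1203 : quadTrace L 1 2 0 3 = -4 * χ := by rw [quadTrace_rotate, h0312]
  have hSG : SG L L = ∑ I₁ : Fin 4, ∑ J₁ : Fin 4, ∑ I₂ : Fin 4, ∑ J₂ : Fin 4,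
      if I₁ < J₁ ∧ I₂ < J₂ then quadTrace L I₁ J₁ I₂ J₂ else 0 := rfl
  rw [hSG]
  simp [Fin.sum_univ_four, h.quadTrace_middle_eq, h.quadTrace_outer_eq, h.quadTrace_odd_eq,
    h.quadTrace_even_eq, h0123, h0213, h0312, h2301, h1302, h1203]
  ring
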